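/- Let ℓ : ℝ^d → ℝ be a convex negative log-likelihood (as arises in Bayesian logistic, probit, Poisson, or negative-binomial regression), let α ∈ (0, +∞), let C be a symmetric positive-definite d×d matrix, and let the posterior have density π(β | X, Y) = Z^{-1} exp(−ℓ(β) − (α/2) βᵀC^{-1}β) with normalizing constant Z. Let β* be the unique maximum of π(· | X, Y) and run the MHI algorithm with proposal N_d(β*, α^{-1}C). With ε_{β*} = exp(ℓ(β*) + (α/2) β*ᵀC^{-1}β*) · Z / ((2π)^{d/2} det(α^{-1}C)^{1/2}), for every lower semicontinuous metric ρ and every t ≥ 1, W_ρ(P^t(β*,·), Π(· | X, Y)) = (1 − ε_{β*})^t ∫_{ℝ^d} ρ(β, β*) dΠ(β | X, Y). -/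

import Mathlib

open MeasureTheory ENNReal Filter Matrix
open scoped BigOperators NNReal

noncomputable section

/-- The set of couplings of two measures. -/
def couplings {E : Type*} [MeasurableSpace E] (μ ν : Measure E) : Set (Measure (E × E)) :=
  {ξ | ξ.map Prod.fst = μ ∧ ξ.map Prod.snd = ν}

/-- The `L₁` Wasserstein (transportation) distance with cost `ρ`, valued in `ℝ≥0∞`:
`W_ρ(μ, ν) = inf over couplings ξ of ∫ ρ dξ`. -/
def wassersteinDist {E : Type*} [MeasurableSpace E] (ρ : E → E → ℝ)
    (μ ν : Measure E) : ℝ≥0∞ :=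
  ⨅ ξ ∈ couplings μ ν, ∫⁻ p, ENNReal.ofReal (ρ p.1 p.2) ∂ξ

/-- `ρ` is a lower semicontinuous metric on the set `Θ`. -/
def IsLSCMetricOn {E : Type*} [TopologicalSpace E] (Θ : Set E) (ρ : E → E → ℝ) : Prop :=
  LowerSemicontinuousOn (fun p : E × E => ρ p.1 p.2) (Θ ×ˢ Θ) ∧
  (∀ x ∈ Θ, ∀ y ∈ Θ, 0 ≤ ρ x y) ∧ (∀ x ∈ Θ, ρ x x = 0) ∧
  (∀ x ∈ Θ, ∀ y ∈ Θ, ρ x y = 0 → x = y) ∧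
  (∀ x ∈ Θ, ∀ y ∈ Θ, ρ x y = ρ y x) ∧
  (∀ x ∈ Θ, ∀ y ∈ Θ, ∀ z ∈ Θ, ρ x z ≤ ρ x y + ρ y z)

/-- Metropolis–Hastings acceptance ratio for target density `π` and proposal density `q`. -/
def mhAccept {E : Type*} (π : E → ℝ) (q : E → E → ℝ) (θ θ' : E) : ℝ :=
  if 0 < π θ * q θ θ' then min (π θ' * q θ' θ / (π θ * q θ θ')) 1 else 1

/-- Metropolis–Hastings overall acceptance probability `A(θ)`. -/
def mhAcceptProb {E : Type*} [MeasureSpace E] (Θ : Set E) (π : E → ℝ) (q : E → E → ℝ)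
    (θ : E) : ℝ :=
  ∫ θ' in Θ, mhAccept π q θ θ' * q θ θ'

/-- The Metropolis–Hastings Markov kernel
`P(θ, B) = ∫_B a(θ,θ') q(θ,θ') dθ' + δ_θ(B) (1 - A(θ))`. -/
def mhKernel {E : Type*} [MeasureSpace E] (Θ : Set E) (π : E → ℝ) (q : E → E → ℝ)
    (θ : E) : Measure E :=
  (volume.restrict Θ).withDensity (fun θ' => ENNReal.ofReal (mhAccept π q θ θ' * q θ θ')) +
    (ENNReal.ofReal (1 - mhAcceptProb Θ π q θ)) • Measure.dirac θ

/-- `t`-fold iterate `P^t` of a Markov kernel, with `P^0(θ, ·) = δ_θ`. -/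
def kernelIter {E : Type*} [MeasurableSpace E] (P : E → Measure E) : ℕ → E → Measure E
  | 0, θ => Measure.dirac θ
  | (t + 1), θ => (P θ).bind (kernelIter P t)


/-- Acceptance ratio for the Metropolis–Hastings independence (MHI) algorithm, whose
proposal density `q` does not depend on the current state. -/
def mhiAccept {E : Type*} (π : E → ℝ) (q : E → ℝ) (θ θ' : E) : ℝ :=
  if 0 < π θ * q θ' then min (π θ' * q θ / (π θ * q θ')) 1 else 1

/-- Overall acceptance probability `A(θ)` for the MHI algorithm. -/
def mhiAcceptProb {E : Type*} [MeasureSpace E] (Θ : Set E) (π : E → ℝ) (q : E → ℝ)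
    (θ : E) : ℝ :=
  ∫ θ' in Θ, mhiAccept π q θ θ' * q θ'

/-- The MHI Markov kernel
`P(θ, B) = ∫_B a(θ,θ') q(θ') dθ' + δ_θ(B) (1 - A(θ))`. -/
def mhiKernel {E : Type*} [MeasureSpace E] (Θ : Set E) (π : E → ℝ) (q : E → ℝ)
    (θ : E) : Measure E :=
  (volume.restrict Θ).withDensity (fun θ' => ENNReal.ofReal (mhiAccept π q θ θ' * q θ')) +
    (ENNReal.ofReal (1 - mhiAcceptProb Θ π q θ)) • Measure.dirac θ


/-- Density of the `d`-dimensional Gaussian distribution `N_d(m, α⁻¹ C)`. -/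
def gaussDensity {d : ℕ} (m : Fin d → ℝ) (α : ℝ) (C : Matrix (Fin d) (Fin d) ℝ)
    (θ : Fin d → ℝ) : ℝ :=
  (2 * Real.pi) ^ (-(d : ℝ) / 2) * α ^ ((d : ℝ) / 2) * C.det ^ (-(1 : ℝ) / 2) *
    Real.exp (-(α / 2) * ((θ - m) ⬝ᵥ (C⁻¹ *ᵥ (θ - m))))

end

/-!
Write `p` for the posterior density, `q` for the Gaussian proposal and `f = -log p` up to a
constant. Since `f` is a convex function plus the quadratic form of the proposal, it exceeds its
minimum by at least that quadratic form centred at the mode (`quad_growth`). Hence `q / p` is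
minimal at the mode, with minimum `ε`, and the sub-density of accepted moves from the mode is
exactly `ε p`: one step is `P(β*, ·) = ε Π + (1 - ε) δ` with `δ` the point mass at `β*`
(`mhiKernel_at_min`). Detailed balance gives invariance of `Π` (`bind_mhiKernel`), so
`P^t(β*, ·) = (1 - (1 - ε)^t) Π + (1 - ε)^t δ` (`kernelIter_eq`).

It remains to transport such a mixture to `Π` (`wassersteinDist_mix`). Leaving the `Π`-part in
place and spreading the point mass according to `Π` gives the upper bound. For the lower bound,
truncations of `ρ(·, β*)` are bounded and `1`-Lipschitz for `ρ`, hence admissible as dual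
potentials; monotone convergence removes the truncation, also when `∫ ρ(·, β*) dΠ = ∞`.

The normalisation `∫ q = 1` (`gauss_lintegral`) is what ensures `ε ≤ 1` and that rejection
probabilities are not truncated by `ENNReal.ofReal`.
-/

/-! ### The Gaussian proposal and growth around the mode -/

open scoped MatrixOrder ComplexOrder in
/-- The Gaussian density has total mass one: a square root of the precision matrix reduces it to a
product of one-dimensional Gaussian integrals. -/
theorem gauss_lintegral {d : ℕ} (m : Fin d → ℝ) {α : ℝ} (hα : 0 < α)
    {C : Matrix (Fin d) (Fin d) ℝ} (hC : C.PosDef) :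
    ∫⁻ θ, ENNReal.ofReal (gaussDensity m α C θ) = 1 := by
  obtain ⟨B, hB⟩ : ∃ B : Matrix (Fin d) (Fin d) ℝ, C⁻¹ = Bᵀ * B := by
    obtain ⟨B, hB⟩ := CStarAlgebra.nonneg_iff_eq_star_mul_self.mp
      (Matrix.nonneg_iff_posSemidef.mpr hC.inv.posSemidef)
    exact ⟨B, by simpa [Matrix.star_eq_conjTranspose] using hB⟩
  have hdet : C.det⁻¹ = B.det ^ 2 := by
    rw [← Ring.inverse_eq_inv', ← Matrix.det_nonsing_inv, hB, Matrix.det_mul, Matrix.det_transpose]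
    ring
  have hCd := hC.det_pos
  have hBd : B.det ≠ 0 := by
    intro h
    rw [h] at hdet
    have := inv_pos.mpr hCd
    norm_num at hdet
    linarith
  have hpow : C.det ^ (-(1 : ℝ) / 2) = |B.det| := by
    rw [show (-(1 : ℝ) / 2) = -(1 / 2) by ring, Real.rpow_neg hCd.le, ← Real.inv_rpow hCd.le,
      hdet, ← Real.sqrt_eq_rpow, Real.sqrt_sq_eq_abs]
  set c : ℝ := (2 * Real.pi) ^ (-(d : ℝ) / 2) * α ^ ((d : ℝ) / 2) * |B.det| with hc
  have hc0 : 0 ≤ c := by positivity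
  let g : (Fin d → ℝ) → ℝ := fun y => ∏ i, Real.exp (-(α / 2) * y i ^ 2)
  have hg0 : ∀ y, 0 ≤ g y := fun y => Finset.prod_nonneg fun i _ => (Real.exp_pos _).le
  have hgm : Measurable g := by fun_prop
  have hdens : ∀ θ, gaussDensity m α C θ = c * g (Matrix.toLin' B (θ - m)) := by
    intro θ
    simp only [gaussDensity, hpow, g, ← Real.exp_sum, ← Finset.mul_sum, Matrix.toLin'_apply, hB]
    congr 3
    rw [← Matrix.mulVec_mulVec, Matrix.dotProduct_mulVec, Matrix.vecMul_transpose, dotProduct]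
    simp only [pow_two]
  have hgi : ∫⁻ y, ENNReal.ofReal (g y) = ENNReal.ofReal (√(Real.pi / (α / 2)) ^ d) := by
    have hint : Integrable g :=
      Integrable.fintype_prod fun _ => integrable_exp_neg_mul_sq (half_pos hα)
    rw [← ofReal_integral_eq_lintegral_ofReal hint (Eventually.of_forall hg0)]
    simp only [g]
    rw [integral_fintype_prod_volume_eq_pow (fun x : ℝ => Real.exp (-(α / 2) * x ^ 2)),
      integral_gaussian, Fintype.card_fin]
  simp_rw [hdens, ENNReal.ofReal_mul hc0]
  rw [lintegral_const_mul _ (by fun_prop),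
    lintegral_sub_right_eq_self (fun x => ENNReal.ofReal (g (Matrix.toLin' B x))) m,
    ← lintegral_map (f := fun y => ENNReal.ofReal (g y)) (by fun_prop) (by fun_prop),
    Real.map_matrix_volume_pi_eq_smul_volume_pi hBd, lintegral_smul_measure, hgi, smul_eq_mul,
    ← ENNReal.ofReal_mul (by positivity), ← ENNReal.ofReal_mul hc0, ENNReal.ofReal_eq_one, hc,
    abs_inv]
  have hB' : |B.det| ≠ 0 := abs_ne_zero.mpr hBd
  have h1 : √(Real.pi / (α / 2)) ^ d
      = (2 * Real.pi) ^ ((d : ℝ) / 2) * α ^ (-((d : ℝ) / 2)) := by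
    rw [show Real.pi / (α / 2) = 2 * Real.pi / α by field_simp, Real.sqrt_eq_rpow,
      ← Real.rpow_natCast, ← Real.rpow_mul (by positivity),
      Real.div_rpow (by positivity) hα.le, Real.rpow_neg hα.le]
    rw [show (1 / 2 : ℝ) * d = d / 2 by ring]; rfl
  have e1 : (2 * Real.pi) ^ (-(d : ℝ) / 2) * (2 * Real.pi) ^ ((d : ℝ) / 2) = 1 := by
    rw [← Real.rpow_add (by positivity), neg_div, neg_add_cancel, Real.rpow_zero]
  have e2 : α ^ ((d : ℝ) / 2) * α ^ (-((d : ℝ) / 2)) = 1 := by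
    rw [← Real.rpow_add hα, add_neg_cancel, Real.rpow_zero]
  rw [h1]
  calc _ = ((2 * Real.pi) ^ (-(d : ℝ) / 2) * (2 * Real.pi) ^ ((d : ℝ) / 2)) *
        (α ^ ((d : ℝ) / 2) * α ^ (-((d : ℝ) / 2))) * (|B.det| * |B.det|⁻¹) := by ring
    _ = 1 := by rw [e1, e2, mul_inv_cancel₀ hB']; norm_num

/-- A convex function plus a quadratic form grows at least quadratically away from its
minimiser. -/
theorem quad_growth {d : ℕ} {ℓ : (Fin d → ℝ) → ℝ} (hℓ : ConvexOn ℝ Set.univ ℓ) (α : ℝ)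
    (A : Matrix (Fin d) (Fin d) ℝ) {b : Fin d → ℝ}
    (hb : ∀ β, ℓ b + α / 2 * (b ⬝ᵥ (A *ᵥ b)) ≤ ℓ β + α / 2 * (β ⬝ᵥ (A *ᵥ β)))
    (β : Fin d → ℝ) :
    ℓ b + α / 2 * (b ⬝ᵥ (A *ᵥ b)) + α / 2 * ((β - b) ⬝ᵥ (A *ᵥ (β - b))) ≤
      ℓ β + α / 2 * (β ⬝ᵥ (A *ᵥ β)) := by
  obtain ⟨h, rfl⟩ : ∃ h, β = b + h := ⟨β - b, by abel⟩
  simp only [add_sub_cancel_left]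
  set Q := h ⬝ᵥ (A *ᵥ h) with hQ
  set R := b ⬝ᵥ (A *ᵥ h) + h ⬝ᵥ (A *ᵥ b) with hR
  set Q0 := b ⬝ᵥ (A *ᵥ b) with hQ0
  have hquad : ∀ s : ℝ, (b + s • h) ⬝ᵥ (A *ᵥ (b + s • h)) = Q0 + s * R + s ^ 2 * Q := by
    intro s
    simp only [Matrix.mulVec_add, Matrix.mulVec_smul, dotProduct_add, add_dotProduct,
      dotProduct_smul, smul_dotProduct, smul_eq_mul, hQ, hR, hQ0]
    ring
  have hq1 : (b + h) ⬝ᵥ (A *ᵥ (b + h)) = Q0 + R + Q := by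
    have := hquad 1
    simpa using this
  rw [hq1]
  have key : ∀ s : ℝ, 0 < s → s ≤ 1 →
      α / 2 * Q * (1 - s) ≤ ℓ (b + h) + α / 2 * (Q0 + R + Q) - (ℓ b + α / 2 * Q0) := by
    intro s hs hs1
    have h1 := hb (b + s • h)
    rw [hquad] at h1
    have h2 := hℓ.2 (Set.mem_univ b) (Set.mem_univ (b + h)) (sub_nonneg.mpr hs1) hs.le (by ring)
    rw [show (1 - s) • b + s • (b + h) = b + s • h by module] at h2
    simp only [smul_eq_mul] at h2
    refine le_of_mul_le_mul_left ?_ hs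
    nlinarith
  -- let the interpolation parameter tend to zero
  have hlim : Tendsto (fun s : ℝ => α / 2 * Q * (1 - s)) (nhdsWithin 0 (Set.Ioi 0))
      (nhds (α / 2 * Q)) := by
    have : Continuous fun s : ℝ => α / 2 * Q * (1 - s) := by fun_prop
    simpa using (this.tendsto 0).mono_left nhdsWithin_le_nhds
  have := le_of_tendsto hlim (by
    filter_upwards [Ioc_mem_nhdsGT (zero_lt_one' ℝ)] with s hs using key s hs.1 hs.2)
  linarith

/-! ### The independence sampler with positive densities -/

/-- Sub-density of the accepted moves of the MHI chain from `x`, in closed form for positive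
target density `p` and proposal density `q`. -/
noncomputable def acceptDensity {E : Type*} (p q : E → ℝ) (x y : E) : ℝ≥0∞ :=
  ENNReal.ofReal (min (p y * q x / p x) (q y))

theorem acceptDensity_le {E : Type*} (p q : E → ℝ) (x y : E) :
    acceptDensity p q x y ≤ ENNReal.ofReal (q y) :=
  ENNReal.ofReal_le_ofReal (min_le_right _ _)

theorem measurable_acceptDensity {E : Type*} [MeasurableSpace E] {p q : E → ℝ} (hp : Measurable p) (hq : Measurable q) :
    Measurable (Function.uncurry (acceptDensity p q)) := by
  unfold acceptDensity Function.uncurry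
  fun_prop

/-- Detailed balance for the accepted moves. -/
theorem detailed_balance {E : Type*} {p q : E → ℝ} (hp : ∀ x, 0 < p x) (x y : E) :
    ENNReal.ofReal (p x) * acceptDensity p q x y =
      ENNReal.ofReal (p y) * acceptDensity p q y x := by
  unfold acceptDensity
  rw [← ENNReal.ofReal_mul (hp x).le, ← ENNReal.ofReal_mul (hp y).le,
    mul_min_of_nonneg _ _ (hp x).le, mul_min_of_nonneg _ _ (hp y).le,
    mul_div_cancel₀ _ (hp x).ne', mul_div_cancel₀ _ (hp y).ne', min_comm]

/-- The real-valued kernel of the definition, with its Bochner integral and truncated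
`1 - A`, rewritten with extended nonnegative quantities. This uses that `q` has mass one. -/
theorem mhiKernel_eq {E : Type*} [MeasureSpace E] {p q : E → ℝ}
    (hp : ∀ x, 0 < p x) (hq : ∀ x, 0 < q x)
    (hpm : Measurable p) (hqm : Measurable q) (hq1 : ∫⁻ y, ENNReal.ofReal (q y) = 1) (x : E) :
    mhiKernel Set.univ p q x = volume.withDensity (acceptDensity p q x) +
      (1 - ∫⁻ y, acceptDensity p q x y) • Measure.dirac x := by
  have hacc : ∀ y, mhiAccept p q x y * q y = min (p y * q x / p x) (q y) := by
    intro y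
    have hpos : 0 < p x * q y := mul_pos (hp x) (hq y)
    have := (hp x).ne'
    have := (hq y).ne'
    rw [mhiAccept, if_pos hpos, min_mul_of_nonneg _ _ (hq y).le, one_mul]
    congr 1
    field_simp
  have hnn : ∀ y, 0 ≤ min (p y * q x / p x) (q y) := fun y =>
    le_min (div_nonneg (mul_nonneg (hp y).le (hq x).le) (hp x).le) (hq y).le
  have hle : ∫⁻ y, acceptDensity p q x y ≤ 1 :=
    hq1 ▸ lintegral_mono fun y => acceptDensity_le p q x y
  have hm : Measurable fun y => min (p y * q x / p x) (q y) := by fun_prop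
  have hint : Integrable fun y => min (p y * q x / p x) (q y) := by
    refine ⟨hm.aestronglyMeasurable, ?_⟩
    rw [hasFiniteIntegral_iff_ofReal (Eventually.of_forall hnn)]
    exact hle.trans_lt ENNReal.one_lt_top
  have hA : ENNReal.ofReal (1 - mhiAcceptProb Set.univ p q x)
      = 1 - ∫⁻ y, acceptDensity p q x y := by
    rw [mhiAcceptProb, Measure.restrict_univ]
    simp_rw [hacc]
    rw [ENNReal.ofReal_sub _ (integral_nonneg hnn), ENNReal.ofReal_one,
      ofReal_integral_eq_lintegral_ofReal hint (Eventually.of_forall hnn)]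
    rfl
  rw [mhiKernel, hA, Measure.restrict_univ]
  simp_rw [hacc]
  rfl

theorem measurable_mhiKernel {E : Type*} [MeasureSpace E] [SFinite (volume : Measure E)]
    {p q : E → ℝ} (hp : ∀ x, 0 < p x) (hq : ∀ x, 0 < q x)
    (hpm : Measurable p) (hqm : Measurable q) (hq1 : ∫⁻ y, ENNReal.ofReal (q y) = 1) :
    Measurable (mhiKernel Set.univ p q) := by
  refine Measure.measurable_of_measurable_coe _ fun s hs => ?_
  have hk := measurable_acceptDensity hpm hqm
  simp_rw [mhiKernel_eq hp hq hpm hqm hq1, Measure.add_apply, Measure.smul_apply,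
    withDensity_apply _ hs, Measure.dirac_apply' _ hs, smul_eq_mul]
  refine (Measurable.lintegral_prod_right' (ν := volume.restrict s) hk).add ?_
  exact (measurable_const.sub (Measurable.lintegral_prod_right' (ν := volume) hk)).mul
    (measurable_const.indicator hs)

theorem measurable_kernelIter {E : Type*} [MeasurableSpace E] {P : E → Measure E}
    (hP : Measurable P) : ∀ t, Measurable (kernelIter P t)
  | 0 => Measure.measurable_dirac
  | t + 1 => (Measure.measurable_bind' (measurable_kernelIter hP t)).comp hP

/-- The target is invariant for the MHI kernel. -/
theorem bind_mhiKernel {E : Type*} [MeasureSpace E] [SFinite (volume : Measure E)]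
    {p q : E → ℝ} (hp : ∀ x, 0 < p x) (hq : ∀ x, 0 < q x)
    (hpm : Measurable p) (hqm : Measurable q) (hq1 : ∫⁻ y, ENNReal.ofReal (q y) = 1) :
    (volume.withDensity fun x => ENNReal.ofReal (p x)).bind (mhiKernel Set.univ p q) =
      volume.withDensity fun x => ENNReal.ofReal (p x) := by
  have hk := measurable_acceptDensity hpm hqm
  have hP := measurable_mhiKernel hp hq hpm hqm hq1
  have hA : Measurable fun x => ∫⁻ y, acceptDensity p q x y :=
    Measurable.lintegral_prod_right' (ν := volume) hk
  have hle : ∀ x, ∫⁻ y, acceptDensity p q x y ≤ 1 := fun x =>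
    hq1 ▸ lintegral_mono fun y => acceptDensity_le p q x y
  have hpm' : Measurable fun x => ENNReal.ofReal (p x) := by fun_prop
  ext s hs
  have hm1 : Measurable fun x => ∫⁻ y in s, acceptDensity p q x y :=
    Measurable.lintegral_prod_right' (ν := volume.restrict s) hk
  have hPs : Measurable fun x => mhiKernel Set.univ p q x s :=
    (Measure.measurable_coe hs).comp hP
  rw [Measure.bind_apply hs hP.aemeasurable, withDensity_apply _ hs,
    lintegral_withDensity_eq_lintegral_mul _ hpm' hPs]
  have hsplit : ∀ x, ((fun x => ENNReal.ofReal (p x)) * fun x => mhiKernel Set.univ p q x s) x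
      = ENNReal.ofReal (p x) * (∫⁻ y in s, acceptDensity p q x y) +
        s.indicator
          (fun x => ENNReal.ofReal (p x) * (1 - ∫⁻ y, acceptDensity p q x y)) x := by
    intro x
    rw [Pi.mul_apply, mhiKernel_eq hp hq hpm hqm hq1, Measure.add_apply, Measure.smul_apply,
      withDensity_apply _ hs, Measure.dirac_apply' _ hs, smul_eq_mul, mul_add]
    by_cases hx : x ∈ s <;> simp [hx]
  simp_rw [hsplit]
  have hm3 : Measurable fun x => ENNReal.ofReal (p x) * ∫⁻ y in s, acceptDensity p q x y :=
    hpm'.mul hm1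
  have hm4 : Measurable fun x => ENNReal.ofReal (p x) * ∫⁻ y, acceptDensity p q x y :=
    hpm'.mul hA
  rw [lintegral_add_left hm3, lintegral_indicator hs]
  -- Fubini and detailed balance: the accepted flow into `s` equals the accepted flow out of `s`.
  have hflow : ∫⁻ x, ENNReal.ofReal (p x) * ∫⁻ y in s, acceptDensity p q x y =
      ∫⁻ y in s, ENNReal.ofReal (p y) * ∫⁻ x, acceptDensity p q y x := by
    have hm2 : ∀ x, Measurable fun y => acceptDensity p q x y := fun x =>
      hk.comp measurable_prodMk_left
    simp_rw [← lintegral_const_mul _ (hm2 _)]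
    rw [lintegral_lintegral_swap]
    · simp_rw [detailed_balance hp]
    · exact ((hpm'.comp measurable_fst).mul hk).aemeasurable
  rw [hflow, ← lintegral_add_left hm4]
  refine lintegral_congr fun x => ?_
  rw [← mul_add, add_tsub_cancel_of_le (hle x), mul_one]

theorem bind_kernelIter {E : Type*} [MeasurableSpace E] {P : E → Measure E}
    (hP : Measurable P) {μ : Measure E} (hμ : μ.bind P = μ) :
    ∀ t, μ.bind (kernelIter P t) = μ
  | 0 => Measure.bind_dirac
  | t + 1 => by
    have : kernelIter P (t + 1) = fun x => (P x).bind (kernelIter P t) := rfl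
    rw [this, ← Measure.bind_bind hP.aemeasurable (measurable_kernelIter hP t).aemeasurable, hμ,
      bind_kernelIter hP hμ t]

theorem add_bind {E F : Type*} [MeasurableSpace E] [MeasurableSpace F] (μ ν : Measure E)
    {f : E → Measure F} (hf : Measurable f) : (μ + ν).bind f = μ.bind f + ν.bind f := by
  ext s hs
  simp [Measure.bind_apply hs hf.aemeasurable, lintegral_add_measure]

/-- If one step from `x₀` either draws from the invariant law or stays at `x₀`, so do `t` steps,
with geometrically decaying holding probability. -/
theorem kernelIter_eq {E : Type*} [MeasurableSpace E] {P : E → Measure E}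
    (hP : Measurable P) {μ : Measure E} (hμ : μ.bind P = μ) {a b : ℝ≥0∞} (hab : a + b = 1)
    {x₀ : E} (h : P x₀ = a • μ + b • Measure.dirac x₀) (t : ℕ) :
    ∃ c : ℝ≥0∞, c + b ^ t = 1 ∧ kernelIter P t x₀ = c • μ + b ^ t • Measure.dirac x₀ := by
  induction t with
  | zero => exact ⟨0, by simp, by simp [kernelIter]⟩
  | succ t ih =>
    obtain ⟨c, hc, ih⟩ := ih
    have hm := measurable_kernelIter hP t
    refine ⟨a + b * c, ?_, ?_⟩
    · rw [pow_succ', add_assoc, ← mul_add, hc, mul_one, hab]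
    · rw [kernelIter, h, add_bind _ _ hm, Measure.bind_smul, Measure.bind_smul,
        bind_kernelIter hP hμ t, Measure.dirac_bind hm, ih, smul_add, smul_smul, smul_smul,
        ← add_assoc, ← add_smul, pow_succ']

/-- At a point minimising `q / p`, with minimum `ε`, one step draws from the target with
probability `ε` and otherwise stays put. -/
theorem mhiKernel_at_min {E : Type*} [MeasureSpace E] {p q : E → ℝ}
    (hp : ∀ x, 0 < p x) (hq : ∀ x, 0 < q x)
    (hpm : Measurable p) (hqm : Measurable q) (hq1 : ∫⁻ y, ENNReal.ofReal (q y) = 1)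
    (hp1 : ∫⁻ y, ENNReal.ofReal (p y) = 1) {ε : ℝ} (hε : 0 ≤ ε) {x₀ : E}
    (hx₀ : q x₀ = ε * p x₀) (hmin : ∀ y, ε * p y ≤ q y) :
    mhiKernel Set.univ p q x₀ =
      ENNReal.ofReal ε • (volume.withDensity fun x => ENNReal.ofReal (p x)) +
        (1 - ENNReal.ofReal ε) • Measure.dirac x₀ := by
  have hacc : acceptDensity p q x₀ = ENNReal.ofReal ε • fun y => ENNReal.ofReal (p y) := by
    funext y
    have h0 := (hp x₀).ne'
    have : p y * q x₀ / p x₀ = ε * p y := by rw [hx₀]; field_simp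
    rw [acceptDensity, this, min_eq_left (hmin y), ENNReal.ofReal_mul hε]
    rfl
  have hpm' : Measurable fun x => ENNReal.ofReal (p x) := by fun_prop
  rw [mhiKernel_eq hp hq hpm hqm hq1, hacc, withDensity_smul _ hpm']
  simp only [Pi.smul_apply, smul_eq_mul]
  rw [lintegral_const_mul _ hpm', hp1, mul_one]

/-! ### Wasserstein distance from a mixture with a point mass -/

/-- Transport from a mixture of `μ` and a point mass to `μ`: the mass already distributed
as `μ` costs nothing, whatever the cost metric. -/
theorem wassersteinDist_mix {E : Type*} [MeasurableSpace E] {ρ : E → E → ℝ}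
    (hρm : Measurable fun p : E × E => ρ p.1 p.2) (hρ0 : ∀ x y, 0 ≤ ρ x y)
    (hρr : ∀ x, ρ x x = 0) (hρs : ∀ x y, ρ x y = ρ y x)
    (hρt : ∀ x y z, ρ x z ≤ ρ x y + ρ y z) (μ : Measure E) [IsProbabilityMeasure μ]
    (x₀ : E) {c b : ℝ≥0∞} (hcb : c + b = 1) :
    wassersteinDist ρ (c • μ + b • Measure.dirac x₀) μ =
      b * ∫⁻ x, ENNReal.ofReal (ρ x x₀) ∂μ := by
  have hρm' : Measurable fun p : E × E => ENNReal.ofReal (ρ p.1 p.2) := hρm.ennreal_ofReal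
  have hdiag : Measurable fun x : E => (x, x) := by fun_prop
  have hpt : Measurable fun x : E => (x₀, x) := by fun_prop
  have hc1 : c ≤ 1 := hcb ▸ le_self_add
  have hcT : c ≠ ∞ := (hc1.trans_lt ENNReal.one_lt_top).ne
  refine le_antisymm ?_ ?_
  · -- couple the `μ`-part diagonally and the point mass independently
    have hmem : c • μ.map (fun x => (x, x)) + b • μ.map (fun x => (x₀, x)) ∈
        couplings (c • μ + b • Measure.dirac x₀) μ := by
      constructor
      · rw [Measure.map_add _ _ measurable_fst, Measure.map_smul, Measure.map_smul,
          Measure.map_map measurable_fst hdiag, Measure.map_map measurable_fst hpt]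
        have h1 : (Prod.fst ∘ fun x : E => (x, x)) = id := rfl
        have h2 : (Prod.fst ∘ fun x : E => (x₀, x)) = fun _ => x₀ := rfl
        rw [h1, h2, Measure.map_id, Measure.map_const, measure_univ, one_smul]
      · rw [Measure.map_add _ _ measurable_snd, Measure.map_smul, Measure.map_smul,
          Measure.map_map measurable_snd hdiag, Measure.map_map measurable_snd hpt]
        have h1 : (Prod.snd ∘ fun x : E => (x, x)) = id := rfl
        have h2 : (Prod.snd ∘ fun x : E => (x₀, x)) = id := rfl
        rw [h1, h2, Measure.map_id, ← add_smul, hcb, one_smul]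
    refine (iInf₂_le _ hmem).trans ?_
    rw [lintegral_add_measure, lintegral_smul_measure, lintegral_smul_measure,
      lintegral_map hρm' hdiag, lintegral_map hρm' hpt]
    simp [hρr, hρs x₀]
  · refine le_iInf₂ fun ξ hξ => ?_
    obtain ⟨h1, h2⟩ := hξ
    -- `g n` is a bounded function, `1`-Lipschitz for `ρ`, increasing to `ρ · x₀`
    let g : ℕ → E → ℝ≥0∞ := fun n x => min (ENNReal.ofReal (ρ x x₀)) n
    have hgm : ∀ n, Measurable (g n) := fun n =>
      (hρm'.comp (measurable_id.prodMk measurable_const)).min measurable_const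
    have hg0 : ∀ n, g n x₀ = 0 := fun n => by simp [g, hρr]
    have hgL : ∀ n x y, g n y ≤ ENNReal.ofReal (ρ x y) + g n x := by
      intro n x y
      simp only [g, add_min]
      refine min_le_min ?_ le_add_self
      rw [← ENNReal.ofReal_add (hρ0 _ _) (hρ0 _ _)]
      exact ENNReal.ofReal_le_ofReal (by rw [hρs x y]; exact hρt y x x₀)
    have hgT : ∀ n, ∫⁻ x, g n x ∂μ ≠ ∞ := by
      intro n
      refine ne_top_of_le_ne_top (ENNReal.natCast_ne_top n) ?_
      calc ∫⁻ x, g n x ∂μ ≤ ∫⁻ _, (n : ℝ≥0∞) ∂μ := lintegral_mono fun x => min_le_right _ _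
        _ = n := by simp
    have hgn : ∀ n, b * ∫⁻ x, g n x ∂μ ≤ ∫⁻ p, ENNReal.ofReal (ρ p.1 p.2) ∂ξ := by
      intro n
      have hle : ∫⁻ p, g n p.2 ∂ξ ≤ ∫⁻ p, (ENNReal.ofReal (ρ p.1 p.2) + g n p.1) ∂ξ :=
        lintegral_mono fun p => hgL n p.1 p.2
      rw [lintegral_add_left hρm', ← lintegral_map (hgm n) measurable_snd,
        ← lintegral_map (hgm n) measurable_fst, h1, h2, lintegral_add_measure,
        lintegral_smul_measure, lintegral_smul_measure, lintegral_dirac' _ (hgm n), hg0,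
        smul_zero, add_zero, smul_eq_mul] at hle
      have hsplit : ∫⁻ x, g n x ∂μ = b * ∫⁻ x, g n x ∂μ + c * ∫⁻ x, g n x ∂μ := by
        rw [← add_mul, add_comm b, hcb, one_mul]
      rw [hsplit] at hle
      nth_rewrite 2 [← hsplit] at hle
      exact (ENNReal.add_le_add_iff_right (ENNReal.mul_ne_top hcT (hgT n))).mp hle
    have hsup : ∀ x, ⨆ n, g n x = ENNReal.ofReal (ρ x x₀) := by
      intro x
      obtain ⟨N, hN⟩ := exists_nat_ge (ρ x x₀)
      refine le_antisymm (iSup_le fun n => min_le_left _ _) (le_iSup_of_le N ?_)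
      exact le_min le_rfl (by simpa using ENNReal.ofReal_le_ofReal hN)
    simp_rw [← hsup]
    rw [lintegral_iSup hgm (fun i j hij x => min_le_min le_rfl (by exact_mod_cast hij)),
      ENNReal.mul_iSup]
    exact iSup_le hgn

/-! ### The rate from the mode -/

/-- Corollary 5.1, exact rate for Bayesian GLM posteriors.
Posterior density `π(β|X,Y) = Z⁻¹ exp(-ℓ(β) - (α/2) βᵀ C⁻¹ β)` with a convex negative
log-likelihood `ℓ`, and the MHI algorithm with proposal `N_d(β*, α⁻¹ C)` centered at the
posterior mode `β*`. With
`ε = exp(ℓ(β*) + (α/2) β*ᵀ C⁻¹ β*) Z / ((2π)^{d/2} det(α⁻¹ C)^{1/2})`, for every lower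
semicontinuous metric `ρ` and every `t ≥ 1`,
`W_ρ(P^t(β*,·), Π(·|X,Y)) = (1 - ε)^t ∫ ρ(β, β*) dΠ(β|X,Y)`. -/
theorem mhi_glm_posterior_exact_rate
    {d : ℕ} (ℓ : (Fin d → ℝ) → ℝ) (hℓmeas : Measurable ℓ)
    -- the negative log-likelihood is convex
    (hℓconv : ConvexOn ℝ Set.univ ℓ)
    (α : ℝ) (hα : 0 < α)
    (C : Matrix (Fin d) (Fin d) ℝ) (hCsymm : C.IsSymm) (hCpd : C.PosDef)
    (Z : ℝ) (hZ : 0 < Z)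
    -- the posterior is a probability measure with density
    -- `π(β|X,Y) = Z⁻¹ exp(-ℓ(β) - (α/2) βᵀ C⁻¹ β)`
    (Pi : Measure (Fin d → ℝ)) [IsProbabilityMeasure Pi]
    (hPi : Pi = volume.withDensity fun β =>
      ENNReal.ofReal (Z⁻¹ * Real.exp (-ℓ β - α / 2 * (β ⬝ᵥ (C⁻¹ *ᵥ β)))))
    -- `β*` is the unique maximum of the posterior density
    (βstar : Fin d → ℝ)
    (hβstar : ∀ β, ℓ βstar + α / 2 * (βstar ⬝ᵥ (C⁻¹ *ᵥ βstar)) ≤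
      ℓ β + α / 2 * (β ⬝ᵥ (C⁻¹ *ᵥ β)))
    (hβstaru : ∀ β' : Fin d → ℝ,
      (∀ β, ℓ β' + α / 2 * (β' ⬝ᵥ (C⁻¹ *ᵥ β')) ≤ ℓ β + α / 2 * (β ⬝ᵥ (C⁻¹ *ᵥ β))) →
        β' = βstar) :
    ∀ ρ : (Fin d → ℝ) → (Fin d → ℝ) → ℝ, IsLSCMetricOn Set.univ ρ →
      ∀ t : ℕ, 1 ≤ t →
        wassersteinDist ρ
            (kernelIter
              (mhiKernel Set.univ
                (fun β => Z⁻¹ * Real.exp (-ℓ β - α / 2 * (β ⬝ᵥ (C⁻¹ *ᵥ β))))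
                (gaussDensity βstar α C))
              t βstar) Pi =
          ENNReal.ofReal
              ((1 - Real.exp (ℓ βstar + α / 2 * (βstar ⬝ᵥ (C⁻¹ *ᵥ βstar))) * Z /
                  ((2 * Real.pi) ^ ((d : ℝ) / 2) * (α⁻¹ • C).det ^ ((1 : ℝ) / 2))) ^ t) *
            ∫⁻ β, ENNReal.ofReal (ρ β βstar) ∂Pi := by
  intro ρ hρ t _
  obtain ⟨hlsc, hρ0, hρr, -, hρs, hρt⟩ := hρ
  have hρm : Measurable fun x : (Fin d → ℝ) × (Fin d → ℝ) => ρ x.1 x.2 := by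
    rw [Set.univ_prod_univ, lowerSemicontinuousOn_univ_iff] at hlsc
    exact hlsc.measurable
  set p : (Fin d → ℝ) → ℝ :=
    fun β => Z⁻¹ * Real.exp (-ℓ β - α / 2 * (β ⬝ᵥ (C⁻¹ *ᵥ β))) with hpdef
  set q : (Fin d → ℝ) → ℝ := gaussDensity βstar α C with hqdef
  set ε : ℝ := Real.exp (ℓ βstar + α / 2 * (βstar ⬝ᵥ (C⁻¹ *ᵥ βstar))) * Z /
    ((2 * Real.pi) ^ ((d : ℝ) / 2) * (α⁻¹ • C).det ^ ((1 : ℝ) / 2)) with hεdef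
  have hCd := hCpd.det_pos
  set c : ℝ := (2 * Real.pi) ^ (-(d : ℝ) / 2) * α ^ ((d : ℝ) / 2) * C.det ^ (-(1 : ℝ) / 2)
    with hc
  have hc0 : 0 < c := by positivity
  have hdet : (α⁻¹ • C).det ^ ((1 : ℝ) / 2) = (α ^ ((d : ℝ) / 2))⁻¹ * C.det ^ ((1 : ℝ) / 2) := by
    rw [Matrix.det_smul, Fintype.card_fin, Real.mul_rpow (by positivity) hCd.le,
      ← Real.rpow_natCast, ← Real.rpow_mul (by positivity), Real.inv_rpow hα.le, mul_one_div]
  have hεc : ε = Real.exp (ℓ βstar + α / 2 * (βstar ⬝ᵥ (C⁻¹ *ᵥ βstar))) * Z * c := by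
    rw [hεdef, hdet, hc, neg_div, neg_div, Real.rpow_neg (by positivity), Real.rpow_neg hCd.le]
    field_simp
  have hε0 : 0 < ε := by rw [hεc]; positivity
  have hp : ∀ β, 0 < p β := fun β => mul_pos (inv_pos.mpr hZ) (Real.exp_pos _)
  have hq : ∀ β, 0 < q β := fun β => mul_pos hc0 (Real.exp_pos _)
  have hquadm : ∀ m : Fin d → ℝ,
      Measurable fun β : Fin d → ℝ => (β - m) ⬝ᵥ (C⁻¹ *ᵥ (β - m)) := by
    intro m
    have : Continuous fun β : Fin d → ℝ => (β - m) ⬝ᵥ (C⁻¹ *ᵥ (β - m)) := by fun_prop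
    exact this.measurable
  have hpm : Measurable p := by
    have := hquadm 0
    simp only [sub_zero] at this
    fun_prop
  have hqm : Measurable q := ((hquadm βstar).const_mul (-(α / 2))).exp.const_mul c
  have hq1 : ∫⁻ β, ENNReal.ofReal (q β) = 1 := gauss_lintegral βstar hα hCpd
  have hp1 : ∫⁻ β, ENNReal.ofReal (p β) = 1 := by
    have h : Pi Set.univ = 1 := measure_univ
    rwa [hPi, withDensity_apply _ MeasurableSet.univ, Measure.restrict_univ] at h
  have hεp : ∀ β, ε * p β = c * Real.exp (ℓ βstar + α / 2 * (βstar ⬝ᵥ (C⁻¹ *ᵥ βstar)) -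
      (ℓ β + α / 2 * (β ⬝ᵥ (C⁻¹ *ᵥ β)))) := by
    intro β
    rw [hεc, sub_eq_add_neg, Real.exp_add (ℓ βstar + _), neg_add', hpdef]
    field_simp
  have hx₀ : q βstar = ε * p βstar := by
    rw [hεp, sub_self, hqdef, gaussDensity, sub_self]
    simp [hc]
  have hmin : ∀ β, ε * p β ≤ q β := by
    intro β
    rw [hεp, hqdef, gaussDensity]
    refine mul_le_mul_of_nonneg_left (Real.exp_le_exp.mpr ?_) hc0.le
    have := quad_growth hℓconv α C⁻¹ hβstar β
    linarith
  have hε1 : ENNReal.ofReal ε ≤ 1 := by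
    calc ENNReal.ofReal ε = ∫⁻ β, ENNReal.ofReal (ε * p β) := by
          simp_rw [ENNReal.ofReal_mul hε0.le]
          rw [lintegral_const_mul _ hpm.ennreal_ofReal, hp1, mul_one]
      _ ≤ ∫⁻ β, ENNReal.ofReal (q β) :=
          lintegral_mono fun β => ENNReal.ofReal_le_ofReal (hmin β)
      _ = 1 := hq1
  have hε1' : ε ≤ 1 := by simpa using hε1
  have hinv := bind_mhiKernel hp hq hpm hqm hq1
  have hstep := mhiKernel_at_min hp hq hpm hqm hq1 hp1 hε0.le hx₀ hmin
  rw [← hPi] at hinv hstep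
  obtain ⟨a, ha, hiter⟩ := kernelIter_eq (measurable_mhiKernel hp hq hpm hqm hq1) hinv
    (add_tsub_cancel_of_le hε1) hstep t
  rw [hiter, wassersteinDist_mix hρm (fun x y => hρ0 x trivial y trivial)
    (fun x => hρr x trivial) (fun x y => hρs x trivial y trivial)
    (fun x y z => hρt x trivial y trivial z trivial) Pi βstar ha,
    ENNReal.ofReal_pow (sub_nonneg.mpr hε1'), ENNReal.ofReal_sub _ hε0.le, ENNReal.ofReal_one]
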